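/- Let p be an odd prime and let Σ = {C₁, …, C_{p²+1}} be a complete set of p²+1 pairwise disjoint maximal commuting classes in U^{(p²)}. Suppose there exist exactly two maximal commuting classes C_I ≠ C_II with C_I, C_II ∉ Σ and C_I, C_II ⊆ C₁ ∪ … ∪ C_{p+1}, and suppose C_I and C_II are disjoint. Then the p²−p+2 classes {C_I, C_II, C_{p+2}, …, C_{p²+1}} are pairwise disjoint and form an unextendible set of maximal commuting classes. -/

import Mathlib

/-!
Encode `(X^m Z^n) ⊗ (X^k Z^l)` by the vector `(m, n, k, l)` of `𝔽_p⁴`. Two operators commute only if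
their vectors are orthogonal for the standard symplectic form (`sympForm_eq_zero_of_commute`), so a
maximal commuting class together with the identity is encoded by `p²` pairwise orthogonal vectors.
Their span is totally isotropic, hence of dimension at most `2`, so these vectors already form a
plane (`MaxCommClass.exists_submodule`). Two distinct planes meet in dimension at most `1`, so two
distinct maximal commuting classes share at most `p - 1` operators (`ncard_inter_le`).

Consequently a class `D` lying in the union of `p + 1` other classes meets each of them: the
remaining `p` classes could only account for `p (p - 1) < p² - 1` of its elements
(`inter_nonempty_of_subset`). A maximal commuting class avoiding `D₁`, `D₂` and the classes with
index at least `p + 1` is contained in the union of the first `p + 1` classes, because the `C i`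
exhaust the non-identity Pauli operators (`mem_iUnion_of_mem_pauliSet`). It is then neither `D₁` nor
`D₂`, hence one of the first `p + 1` classes; but those all meet `D₁`.
-/

open Matrix
open scoped Kronecker

noncomputable section

/-- ω = exp(2πi/p), a primitive p-th root of unity. -/
def omega_p (p : ℕ) : ℂ := Complex.exp (2 * Real.pi * Complex.I / p)

/-- Generalized Pauli X on ℂ^p : X e_j = e_{j+1}. -/
def genX (p : ℕ) : Matrix (ZMod p) (ZMod p) ℂ :=
  Matrix.of fun i j => if i = j + 1 then 1 else 0

/-- Generalized Pauli Z on ℂ^p : Z e_j = ω^j e_j. -/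
def genZ (p : ℕ) : Matrix (ZMod p) (ZMod p) ℂ :=
  Matrix.of fun i j => if i = j then omega_p p ^ j.val else 0

/-- The space of p² × p² complex matrices. -/
abbrev PauliMat (p : ℕ) := Matrix (ZMod p × ZMod p) (ZMod p × ZMod p) ℂ

/-- The set U^{(p²)} of p⁴ two-particle generalized Pauli operators
    (X^m Z^n) ⊗ (X^k Z^l), with m,n,k,l ∈ {0,…,p−1}. -/
def PauliSet (p : ℕ) [NeZero p] : Set (PauliMat p) :=
  { U | ∃ m n k l : ZMod p,
      U = (genX p ^ m.val * genZ p ^ n.val) ⊗ₖ (genX p ^ k.val * genZ p ^ l.val) }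

/-- A maximal commuting class: a subset of U^{(p²)} \ {I} of cardinality p² − 1
    whose elements pairwise commute. -/
def MaxCommClass (p : ℕ) [NeZero p] (C : Set (PauliMat p)) : Prop :=
  C ⊆ PauliSet p \ {1} ∧ C.ncard = p ^ 2 - 1 ∧ ∀ U ∈ C, ∀ V ∈ C, Commute U V

/-- U ∘ V: the unique element of U^{(p²)} such that U·V is a power of ω times it. -/
def circ (p : ℕ) [NeZero p] (U V : PauliMat p) : PauliMat p :=
  @Classical.epsilon _ ⟨(0 : PauliMat p)⟩
    fun W => W ∈ PauliSet p ∧ ∃ j : ℕ, U * V = omega_p p ^ j • W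

/-- U^{∘k}: the unique element of U^{(p²)} such that the matrix power U^k is
    a power of ω times it. -/
def cpow (p : ℕ) [NeZero p] (U : PauliMat p) (k : ZMod p) : PauliMat p :=
  @Classical.epsilon _ ⟨(0 : PauliMat p)⟩
    fun W => W ∈ PauliSet p ∧ ∃ j : ℕ, U ^ k.val = omega_p p ^ j • W

/-- Independence: U^k is not a scalar multiple of V^l for any (k,l) ≠ (0,0). -/
def Indep (p : ℕ) [NeZero p] (U V : PauliMat p) : Prop :=
  ∀ k l : ZMod p, (k, l) ≠ (0, 0) → ∀ c : ℂ, U ^ k.val ≠ c • V ^ l.val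

/-- The class ⟨U,V⟩ generated by a pair of independent commuting operators:
    {U^{∘k} ∘ V^{∘l} : (k,l) ≠ (0,0)}. -/
def genClass (p : ℕ) [NeZero p] (U V : PauliMat p) : Set (PauliMat p) :=
  { W | ∃ k l : ZMod p, (k, l) ≠ (0, 0) ∧ W = circ p (cpow p U k) (cpow p V l) }

/-- A complete set of p² + 1 pairwise disjoint maximal commuting classes. -/
def CompleteSet (p : ℕ) [NeZero p] (S : Set (Set (PauliMat p))) : Prop :=
  S.ncard = p ^ 2 + 1 ∧ (∀ C ∈ S, MaxCommClass p C) ∧ S.Pairwise Disjoint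

/-- A family of classes is unextendible if no maximal commuting class is contained
    in U^{(p²)} \ ({I} ∪ ⋃ F). -/
def Unextendible (p : ℕ) [NeZero p] (F : Set (Set (PauliMat p))) : Prop :=
  ¬ ∃ C : Set (PauliMat p), MaxCommClass p C ∧ C ⊆ PauliSet p \ ({1} ∪ ⋃₀ F)

/-! ### Pauli operators as vectors -/

lemma omega_p_pow (p : ℕ) [NeZero p] (j : ZMod p) :
    omega_p p ^ j.val = ZMod.stdAddChar j := by
  have h := ZMod.stdAddChar_coe (N := p) (j.val : ℤ)
  rw [Int.cast_natCast, Int.cast_natCast, ZMod.natCast_zmod_val] at h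
  rw [h, omega_p, ← Complex.exp_nat_mul]
  congr 1
  ring

lemma genX_pow_apply (p : ℕ) [NeZero p] (t : ℕ) (i j : ZMod p) :
    (genX p ^ t) i j = if i = j + (t : ZMod p) then 1 else 0 := by
  induction t generalizing i j with
  | zero => simp [Matrix.one_apply]
  | succ t ih =>
    rw [pow_succ, Matrix.mul_apply]
    have hX (i j : ZMod p) : genX p i j = if i = j + 1 then 1 else 0 := rfl
    simp only [ih, hX, mul_ite, mul_one, mul_zero]
    rw [Finset.sum_ite_eq' Finset.univ (j + 1)]
    simp [add_assoc, add_comm (1 : ZMod p)]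

lemma genZ_pow (p : ℕ) [NeZero p] (n : ZMod p) :
    genZ p ^ n.val = Matrix.diagonal fun j => ZMod.stdAddChar (j * n) := by
  have h : genZ p = Matrix.diagonal fun j => ZMod.stdAddChar j := by
    ext i j
    simp only [genZ, Matrix.of_apply, Matrix.diagonal_apply, omega_p_pow]
    split_ifs with h
    · rw [h]
    · rfl
  rw [h, Matrix.diagonal_pow]
  congr 1
  ext j
  rw [Pi.pow_apply, ← AddChar.map_nsmul_eq_pow, nsmul_eq_mul, ZMod.natCast_zmod_val, mul_comm]

/-- The single-particle operator `X^m Z^n`. -/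
def weyl (p : ℕ) [NeZero p] (m n : ZMod p) : Matrix (ZMod p) (ZMod p) ℂ :=
  genX p ^ m.val * genZ p ^ n.val

lemma weyl_apply (p : ℕ) [NeZero p] (m n i j : ZMod p) :
    weyl p m n i j = if i = j + m then ZMod.stdAddChar (j * n) else 0 := by
  rw [weyl, genZ_pow, Matrix.mul_diagonal, genX_pow_apply]
  simp

lemma weyl_mul_apply_zero (p : ℕ) [NeZero p] (m n m' n' : ZMod p) :
    (weyl p m n * weyl p m' n') (m + m') 0 = ZMod.stdAddChar (m' * n) := by
  rw [Matrix.mul_apply, Finset.sum_eq_single m']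
  · simp [weyl_apply, add_comm]
  · intro b _ hb
    simp [weyl_apply, hb]
  · simp

/-- The vector space `𝔽_p⁴` of exponents `(m, n, k, l)`. -/
abbrev PVec (p : ℕ) := Fin 4 → ZMod p

/-- The Pauli operator `(X^m Z^n) ⊗ (X^k Z^l)` of the exponent vector `(m, n, k, l)`. -/
def pauliOf (p : ℕ) [NeZero p] (v : PVec p) : PauliMat p :=
  weyl p (v 0) (v 1) ⊗ₖ weyl p (v 2) (v 3)

lemma pauliOf_zero (p : ℕ) [NeZero p] : pauliOf p 0 = 1 := by
  simp [pauliOf, weyl]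

lemma pauliSet_eq_range (p : ℕ) [NeZero p] : PauliSet p = Set.range (pauliOf p) := by
  ext U
  constructor
  · rintro ⟨m, n, k, l, rfl⟩
    exact ⟨![m, n, k, l], rfl⟩
  · rintro ⟨v, rfl⟩
    exact ⟨v 0, v 1, v 2, v 3, rfl⟩

lemma pauliSet_finite (p : ℕ) [NeZero p] : (PauliSet p).Finite := by
  rw [pauliSet_eq_range]
  exact Set.finite_range _

lemma ncard_pauliSet_diff_le (p : ℕ) [NeZero p] : (PauliSet p \ {1}).ncard ≤ p ^ 4 - 1 := by
  have h1 : (1 : PauliMat p) ∈ PauliSet p := by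
    rw [pauliSet_eq_range]
    exact ⟨0, pauliOf_zero p⟩
  rw [Set.ncard_sdiff_singleton_of_mem h1]
  refine Nat.sub_le_sub_right ?_ 1
  rw [pauliSet_eq_range, ← Set.image_univ]
  refine (Set.ncard_image_le Set.finite_univ).trans ?_
  simp [Set.ncard_univ]

/-! ### The symplectic form -/

/-- The symplectic form on `𝔽_p⁴` measuring the failure of two Pauli operators to commute. -/
def sympForm (p : ℕ) : LinearMap.BilinForm (ZMod p) (PVec p) :=
  LinearMap.mk₂ (ZMod p) (fun u v => v 0 * u 1 + v 2 * u 3 - (u 0 * v 1 + u 2 * v 3))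
    (by intros; simp only [Pi.add_apply]; ring)
    (by intros; simp only [Pi.smul_apply, smul_eq_mul]; ring)
    (by intros; simp only [Pi.add_apply]; ring)
    (by intros; simp only [Pi.smul_apply, smul_eq_mul]; ring)

lemma sympForm_apply (p : ℕ) (u v : PVec p) :
    sympForm p u v = v 0 * u 1 + v 2 * u 3 - (u 0 * v 1 + u 2 * v 3) := rfl

/-- Compare the entries of the two products in the column of `e_0 ⊗ e_0`, where each product has a
single nonzero entry, a value of the injective character `ZMod.stdAddChar`. -/
lemma sympForm_eq_zero_of_commute (p : ℕ) [NeZero p] {u v : PVec p}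
    (h : Commute (pauliOf p u) (pauliOf p v)) : sympForm p u v = 0 := by
  have h' := congrFun (congrFun h.eq (u 0 + v 0, u 2 + v 2)) (0, 0)
  rw [pauliOf, pauliOf, ← Matrix.mul_kronecker_mul, ← Matrix.mul_kronecker_mul,
    Matrix.kronecker_apply, Matrix.kronecker_apply, weyl_mul_apply_zero, weyl_mul_apply_zero,
    add_comm (u 0), add_comm (u 2), weyl_mul_apply_zero, weyl_mul_apply_zero,
    ← AddChar.map_add_eq_mul, ← AddChar.map_add_eq_mul] at h'
  rw [sympForm_apply, sub_eq_zero]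
  exact ZMod.injective_stdAddChar h'

lemma sympForm_ker (p : ℕ) : (sympForm p).ker = ⊥ := by
  rw [eq_bot_iff]
  intro u hu
  have h (v : PVec p) : sympForm p u v = 0 := by
    rw [LinearMap.mem_ker.1 hu, LinearMap.zero_apply]
  have h0 := h ![1, 0, 0, 0]
  have h1 := h ![0, 1, 0, 0]
  have h2 := h ![0, 0, 1, 0]
  have h3 := h ![0, 0, 0, 1]
  simp [sympForm_apply] at h0 h1 h2 h3
  ext i
  fin_cases i <;> simp [h0, h1, h2, h3]

lemma finrank_span_le_two (p : ℕ) [Fact p.Prime] (S : Set (PVec p))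
    (hS : ∀ u ∈ S, ∀ v ∈ S, sympForm p u v = 0) :
    Module.finrank (ZMod p) (Submodule.span (ZMod p) S) ≤ 2 := by
  have hle : Submodule.span (ZMod p) S ≤
      (sympForm p).orthogonal (Submodule.span (ZMod p) S) := by
    intro v hv
    rw [LinearMap.BilinForm.mem_orthogonal_iff]
    intro u hu
    change sympForm p u v = 0
    induction hu, hv using Submodule.span_induction₂ with
    | mem_mem x y hx hy => exact hS x hx y hy
    | zero_left y hy => simp
    | zero_right x hx => simp
    | add_left x y z hx hy hz h1 h2 => simp [h1, h2]
    | add_right x y z hx hy hz h1 h2 => simp [h1, h2]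
    | smul_left r x y hx hy h => simp [h]
    | smul_right r x y hx hy h => simp [h]
  have h1 := LinearMap.BilinForm.finrank_add_finrank_orthogonal' (B := sympForm p)
    (Submodule.span (ZMod p) S)
  rw [sympForm_ker, inf_bot_eq, finrank_bot, Module.finrank_fin_fun] at h1
  have h2 := Submodule.finrank_mono hle
  omega

/-! ### Maximal commuting classes are isotropic planes -/

lemma one_lt_sq {p : ℕ} (hp : p.Prime) : 1 < p ^ 2 := Nat.one_lt_pow (by norm_num) hp.one_lt

section Classes

variable {p : ℕ} [NeZero p]

lemma MaxCommClass.finite {C : Set (PauliMat p)} (hC : MaxCommClass p C) : C.Finite :=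
  (pauliSet_finite p).subset (hC.1.trans Set.sdiff_subset)

lemma MaxCommClass.nonempty (hp : p.Prime) {C : Set (PauliMat p)} (hC : MaxCommClass p C) :
    C.Nonempty := by
  apply Set.nonempty_of_ncard_ne_zero
  have := one_lt_sq hp
  rw [hC.2.1]
  omega

/-- The exponent vectors of a maximal commuting class, together with `0`, form a plane. -/
lemma MaxCommClass.exists_submodule [Fact p.Prime] {C : Set (PauliMat p)}
    (hC : MaxCommClass p C) : ∃ W : Submodule (ZMod p) (PVec p),
      Module.finrank (ZMod p) W = 2 ∧ ∀ v, v ∈ W ↔ pauliOf p v ∈ insert 1 C := by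
  have hp : p.Prime := Fact.out
  set S : Set (PVec p) := pauliOf p ⁻¹' insert 1 C with hS
  have hcomm : ∀ U ∈ insert 1 C, ∀ V ∈ insert 1 C, Commute U V := by
    rintro U (rfl | hU) V (rfl | hV)
    · exact Commute.one_left _
    · exact Commute.one_left _
    · exact Commute.one_right _
    · exact hC.2.2 U hU V hV
  have hrank := finrank_span_le_two p S fun u hu v hv =>
    sympForm_eq_zero_of_commute p (hcomm _ hu _ hv)
  have himage : pauliOf p '' S = insert 1 C := by
    apply Set.image_preimage_eq_of_subset
    rw [← pauliSet_eq_range]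
    rintro U (rfl | hU)
    · rw [pauliSet_eq_range]
      exact ⟨0, pauliOf_zero p⟩
    · exact (hC.1 hU).1
  have hcard : p ^ 2 ≤ S.ncard := by
    have h1 : (insert 1 C).ncard = p ^ 2 := by
      have := one_lt_sq hp
      rw [Set.ncard_insert_of_notMem (fun h => (hC.1 h).2 rfl) hC.finite, hC.2.1]
      omega
    rw [← h1, ← himage]
    exact Set.ncard_image_le S.toFinite
  have hspan : (Submodule.span (ZMod p) S : Set (PVec p)).ncard =
      p ^ Module.finrank (ZMod p) (Submodule.span (ZMod p) S) := by
    have := Module.natCard_eq_pow_finrank (K := ZMod p) (V := Submodule.span (ZMod p) S)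
    rwa [Nat.card_zmod] at this
  have hle : (Submodule.span (ZMod p) S : Set (PVec p)).ncard ≤ p ^ 2 := by
    rw [hspan]
    exact Nat.pow_le_pow_right hp.pos hrank
  have heq : S = Submodule.span (ZMod p) S :=
    Set.eq_of_subset_of_ncard_le Submodule.subset_span (hle.trans hcard) (Set.toFinite _)
  refine ⟨Submodule.span (ZMod p) S, le_antisymm hrank ?_, fun v => ?_⟩
  · rw [← heq] at hspan
    rw [hspan] at hcard
    exact (Nat.pow_le_pow_iff_right hp.one_lt).1 hcard
  · rw [← SetLike.mem_coe, ← heq, hS, Set.mem_preimage]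

/-- Distinct isotropic planes meet in at most a line, so distinct classes share at most `p - 1`
operators. -/
lemma ncard_inter_le (hp : p.Prime) {C D : Set (PauliMat p)} (hC : MaxCommClass p C)
    (hD : MaxCommClass p D) (hne : C ≠ D) : (C ∩ D).ncard ≤ p - 1 := by
  have : Fact p.Prime := ⟨hp⟩
  obtain ⟨W, hW, hWC⟩ := hC.exists_submodule
  obtain ⟨W', hW', hWD⟩ := hD.exists_submodule
  have key : ∀ {E : Set (PauliMat p)}, MaxCommClass p E → ∀ U ∈ E,
      ∃ v, pauliOf p v = U ∧ v ≠ 0 := by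
    intro E hE U hU
    have h1 := (hE.1 hU).1
    rw [pauliSet_eq_range] at h1
    obtain ⟨v, rfl⟩ := h1
    refine ⟨v, rfl, ?_⟩
    rintro rfl
    exact (hE.1 hU).2 (pauliOf_zero p)
  have hWne : W ≠ W' := by
    rintro rfl
    have hsub : C ⊆ D := by
      intro U hU
      obtain ⟨v, rfl, -⟩ := key hC U hU
      exact ((hWD v).1 ((hWC v).2 (Or.inr hU))).resolve_left (hC.1 hU).2
    exact hne (Set.eq_of_subset_of_ncard_le hsub (by rw [hC.2.1, hD.2.1]) hD.finite)
  have hrank : Module.finrank (ZMod p) (W ⊓ W' : Submodule (ZMod p) (PVec p)) ≤ 1 := by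
    by_contra! h
    have h1 : W ⊓ W' = W := Submodule.eq_of_le_of_finrank_le inf_le_left (by omega)
    have h2 : W ⊓ W' = W' := Submodule.eq_of_le_of_finrank_le inf_le_right (by omega)
    exact hWne (h1.symm.trans h2)
  have hcard : ((W ⊓ W' : Submodule (ZMod p) (PVec p)) : Set (PVec p)).ncard ≤ p := by
    have := Module.natCard_eq_pow_finrank (K := ZMod p)
      (V := (W ⊓ W' : Submodule (ZMod p) (PVec p)))
    rw [Nat.card_zmod] at this
    calc _ = p ^ _ := this
      _ ≤ p ^ 1 := Nat.pow_le_pow_right hp.pos hrank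
      _ = p := pow_one p
  have hsub : C ∩ D ⊆ pauliOf p ''
      (((W ⊓ W' : Submodule (ZMod p) (PVec p)) : Set (PVec p)) \ {0}) := by
    rintro U ⟨hU, hU'⟩
    obtain ⟨v, rfl, hv⟩ := key hC U hU
    exact ⟨v, ⟨⟨(hWC v).2 (Or.inr hU), (hWD v).2 (Or.inr hU')⟩, hv⟩, rfl⟩
  calc (C ∩ D).ncard ≤ _ := Set.ncard_le_ncard hsub (Set.toFinite _)
    _ ≤ _ := Set.ncard_image_le (Set.toFinite _)
    _ = _ := Set.ncard_sdiff_singleton_of_mem (Submodule.zero_mem _)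
    _ ≤ p - 1 := Nat.sub_le_sub_right hcard 1

/-! ### Counting -/

/-- A complete set of classes exhausts the non-identity Pauli operators. -/
lemma mem_iUnion_of_mem_pauliSet (C : Fin (p ^ 2 + 1) → Set (PauliMat p))
    (hmcc : ∀ i, MaxCommClass p (C i)) (hdisj : ∀ i j, i ≠ j → Disjoint (C i) (C j))
    {U : PauliMat p} (hU : U ∈ PauliSet p \ {1}) : ∃ i, U ∈ C i := by
  have hcard : (⋃ i, C i).ncard = p ^ 4 - 1 := by
    rw [Set.ncard_iUnion_of_finite (fun i => (hmcc i).finite) (fun i j h => hdisj i j h),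
      finsum_eq_sum_of_fintype, Finset.sum_congr rfl (fun i _ => (hmcc i).2.1)]
    simp only [Finset.sum_const, Finset.card_univ, Fintype.card_fin, smul_eq_mul]
    rw [← Nat.sq_sub_sq (p ^ 2) 1]
    ring_nf
  have heq : (⋃ i, C i) = PauliSet p \ {1} :=
    Set.eq_of_subset_of_ncard_le (Set.iUnion_subset fun i => (hmcc i).1)
      (hcard ▸ ncard_pauliSet_diff_le p) ((pauliSet_finite p).subset Set.sdiff_subset)
  rw [← heq] at hU
  exact Set.mem_iUnion.1 hU

lemma inter_nonempty_of_subset (hp : p.Prime) (C : Fin (p ^ 2 + 1) → Set (PauliMat p))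
    (hmcc : ∀ i, MaxCommClass p (C i)) {D : Set (PauliMat p)} (hD : MaxCommClass p D)
    (hDC : D ∉ Set.range C)
    (hsub : D ⊆ ⋃ i ∈ {i : Fin (p ^ 2 + 1) | (i : ℕ) < p + 1}, C i)
    {i₀ : Fin (p ^ 2 + 1)} (hi₀ : (i₀ : ℕ) < p + 1) : (D ∩ C i₀).Nonempty := by
  by_contra hemp
  have hlt : p + 1 < p ^ 2 + 1 := by nlinarith [hp.two_le]
  set T : Finset (Fin (p ^ 2 + 1)) := (Finset.Iio ⟨p + 1, hlt⟩).erase i₀ with hT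
  have hTcard : T.card = p := by
    rw [hT, Finset.card_erase_of_mem (by simpa [Fin.lt_def] using hi₀), Fin.card_Iio]
    simp
  have hcover : D ⊆ ⋃ i ∈ T, (D ∩ C i) := by
    intro U hU
    obtain ⟨i, hi, hUi⟩ := Set.mem_iUnion₂.1 (hsub hU)
    refine Set.mem_iUnion₂.2 ⟨i, ?_, hU, hUi⟩
    rw [hT, Finset.mem_erase]
    refine ⟨?_, by simpa [Fin.lt_def] using hi⟩
    rintro rfl
    exact hemp ⟨U, hU, hUi⟩
  have h1 : D.ncard ≤ p * (p - 1) := by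
    calc D.ncard ≤ (⋃ i ∈ T, (D ∩ C i)).ncard :=
          Set.ncard_le_ncard hcover (hD.finite.subset (by simp))
      _ ≤ ∑ i ∈ T, (D ∩ C i).ncard := Finset.set_ncard_biUnion_le _ _
      _ ≤ ∑ i ∈ T, (p - 1) := Finset.sum_le_sum fun i _ =>
          ncard_inter_le hp hD (hmcc i) fun h => hDC ⟨i, h.symm⟩
      _ = p * (p - 1) := by simp [hTcard]
  -- `p² - 1 = (p + 1) (p - 1)` exceeds `p (p - 1)` by `p - 1 ≥ 1`.
  rw [hD.2.1] at h1
  obtain ⟨q, rfl⟩ : ∃ q, p = q + 2 := ⟨p - 2, by have := hp.two_le; omega⟩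
  have h2 : (q + 2) ^ 2 = (q + 2) * (q + 2 - 1) + (q + 2) := by
    simp only [show q + 2 - 1 = q + 1 by omega]
    ring
  omega

end Classes

/-! ### Unextendibility -/

/-- If Σ = {C₁,…,C_{p²+1}} is a complete set and there are exactly two
(disjoint) maximal commuting classes D₁ ≠ D₂ not in Σ contained in C₁ ∪ … ∪ C_{p+1},
then D₁, D₂ together with C_{p+2},…,C_{p²+1} form a pairwise disjoint, unextendible
set of p² − p + 2 classes. -/
theorem stmt8 (p : ℕ) [NeZero p] (hp : p.Prime) (hodd : Odd p)
    (C : Fin (p ^ 2 + 1) → Set (PauliMat p))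
    (hmcc : ∀ i, MaxCommClass p (C i))
    (hdisj : ∀ i j, i ≠ j → Disjoint (C i) (C j))
    (D₁ D₂ : Set (PauliMat p)) (hne : D₁ ≠ D₂) (hDD : Disjoint D₁ D₂)
    (hD₁ : MaxCommClass p D₁ ∧ D₁ ∉ Set.range C ∧
      D₁ ⊆ ⋃ i ∈ {i : Fin (p ^ 2 + 1) | (i : ℕ) < p + 1}, C i)
    (hD₂ : MaxCommClass p D₂ ∧ D₂ ∉ Set.range C ∧
      D₂ ⊆ ⋃ i ∈ {i : Fin (p ^ 2 + 1) | (i : ℕ) < p + 1}, C i)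
    (honlytwo : ∀ D' : Set (PauliMat p),
      (MaxCommClass p D' ∧ D' ∉ Set.range C ∧
        D' ⊆ ⋃ i ∈ {i : Fin (p ^ 2 + 1) | (i : ℕ) < p + 1}, C i) → D' = D₁ ∨ D' = D₂) :
    (insert D₁ (insert D₂
        {E | ∃ i : Fin (p ^ 2 + 1), p + 1 ≤ (i : ℕ) ∧ E = C i})).Pairwise Disjoint ∧
    (insert D₁ (insert D₂
        {E | ∃ i : Fin (p ^ 2 + 1), p + 1 ≤ (i : ℕ) ∧ E = C i})).ncard
      = p ^ 2 - p + 2 ∧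
    Unextendible p (insert D₁ (insert D₂
        {E | ∃ i : Fin (p ^ 2 + 1), p + 1 ≤ (i : ℕ) ∧ E = C i})) := by
  have hinj : Function.Injective C := by
    intro i j hij
    by_contra h
    obtain ⟨U, hU⟩ := (hmcc i).nonempty hp
    exact Set.disjoint_left.1 (hdisj i j h) hU (hij ▸ hU)
  have hfar : ∀ D : Set (PauliMat p),
      D ⊆ ⋃ i ∈ {i : Fin (p ^ 2 + 1) | (i : ℕ) < p + 1}, C i →
      ∀ i : Fin (p ^ 2 + 1), p + 1 ≤ (i : ℕ) → Disjoint D (C i) := by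
    intro D hD i hi
    rw [Set.disjoint_left]
    intro U hU hUi
    obtain ⟨j, hj, hUj⟩ := Set.mem_iUnion₂.1 (hD hU)
    refine Set.disjoint_left.1 (hdisj j i ?_) hUj hUi
    rintro rfl
    exact absurd hj (by simpa using hi)
  have hR : {E | ∃ i : Fin (p ^ 2 + 1), p + 1 ≤ (i : ℕ) ∧ E = C i} =
      C '' {i | p + 1 ≤ (i : ℕ)} := by
    ext E
    simp [eq_comm]
  refine ⟨?_, ?_, ?_⟩
  · rintro A hA B hB hAB
    rcases hA with rfl | rfl | ⟨i, hi, rfl⟩ <;> rcases hB with rfl | rfl | ⟨j, hj, rfl⟩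
    · exact absurd rfl hAB
    · exact hDD
    · exact hfar _ hD₁.2.2 j hj
    · exact hDD.symm
    · exact absurd rfl hAB
    · exact hfar _ hD₂.2.2 j hj
    · exact (hfar _ hD₁.2.2 i hi).symm
    · exact (hfar _ hD₂.2.2 i hi).symm
    · exact hdisj i j fun h => hAB (by rw [h])
  · have hlt : p + 1 < p ^ 2 + 1 := by nlinarith [hp.two_le]
    have hI : ({i : Fin (p ^ 2 + 1) | p + 1 ≤ (i : ℕ)}).ncard = p ^ 2 - p := by
      have : {i : Fin (p ^ 2 + 1) | p + 1 ≤ (i : ℕ)} =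
          (Finset.Ici (⟨p + 1, hlt⟩ : Fin (p ^ 2 + 1)) : Set _) := by
        ext i
        simp [Fin.le_def]
      rw [this, Set.ncard_coe_finset, Fin.card_Ici]
      simp
    have h2 : D₂ ∉ C '' {i | p + 1 ≤ (i : ℕ)} := fun h => hD₂.2.1 (Set.image_subset_range _ _ h)
    have h1 : D₁ ∉ insert D₂ (C '' {i | p + 1 ≤ (i : ℕ)}) := by
      rintro (h | h)
      · exact hne h
      · exact hD₁.2.1 (Set.image_subset_range _ _ h)
    have hfin : (C '' {i | p + 1 ≤ (i : ℕ)}).Finite := Set.toFinite _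
    rw [hR, Set.ncard_insert_of_notMem h1 (hfin.insert _), Set.ncard_insert_of_notMem h2 hfin,
      Set.ncard_image_of_injective _ hinj, hI]
  · rintro ⟨E, hE, hEsub⟩
    have hnot : ∀ U ∈ E, U ∉ ⋃₀ (insert D₁ (insert D₂
        {E | ∃ i : Fin (p ^ 2 + 1), p + 1 ≤ (i : ℕ) ∧ E = C i})) :=
      fun U hU h => (hEsub hU).2 (Or.inr h)
    have hE1 : E ⊆ ⋃ i ∈ {i : Fin (p ^ 2 + 1) | (i : ℕ) < p + 1}, C i := by
      intro U hU
      obtain ⟨i, hi⟩ := mem_iUnion_of_mem_pauliSet C hmcc hdisj (hE.1 hU)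
      refine Set.mem_iUnion₂.2 ⟨i, ?_, hi⟩
      by_contra h
      exact hnot U hU ⟨C i, Or.inr (Or.inr ⟨i, by simpa using h, rfl⟩), hi⟩
    obtain ⟨U, hU⟩ := hE.nonempty hp
    by_cases hmem : E ∈ Set.range C
    · obtain ⟨i, rfl⟩ := hmem
      have hi : (i : ℕ) < p + 1 := by
        by_contra h
        exact hnot U hU ⟨C i, Or.inr (Or.inr ⟨i, by simpa using h, rfl⟩), hU⟩
      obtain ⟨V, hV, hVi⟩ := inter_nonempty_of_subset hp C hmcc hD₁.1 hD₁.2.1 hD₁.2.2 hi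
      exact hnot V hVi ⟨D₁, Or.inl rfl, hV⟩
    · rcases honlytwo E ⟨hE, hmem, hE1⟩ with rfl | rfl
      · exact hnot U hU ⟨_, Or.inl rfl, hU⟩
      · exact hnot U hU ⟨_, Or.inr (Or.inl rfl), hU⟩
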